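/- Let k be a field, let R be a commutative Artinian local k-algebra, and let f : R → S be a surjective homomorphism of commutative rings with S nontrivial (so the kernel of f is contained in the maximal ideal of R and is therefore nilpotent). Let K be an ℕ-indexed chain complex of R-modules such that every term K_i is a flat R-module. If the base-changed complex K ⊗_R S (formed degreewise) is exact, then K is exact. -/

import Mathlib

open CategoryTheory Limits

noncomputable instance {R S : Type} [CommRing R] [CommRing S] (f : R →+* S) :
    (ModuleCat.extendScalars.{0, 0, 0} f).Additive := by
  haveI h1 : PreservesColimitsOfSize.{0, 0} (ModuleCat.extendScalars.{0, 0, 0} f) :=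
    (ModuleCat.extendRestrictScalarsAdj f).leftAdjoint_preservesColimits
  haveI h2 : Functor.IsLeftAdjoint (ModuleCat.extendScalars.{0, 0, 0} f) :=
    (ModuleCat.extendRestrictScalarsAdj f).isLeftAdjoint
  haveI h2' : PreservesColimitsOfShape (Discrete WalkingPair)
      (ModuleCat.extendScalars.{0, 0, 0} f) :=
    h1.preservesColimitsOfShape
  haveI h3 : PreservesBinaryBiproducts (ModuleCat.extendScalars.{0, 0, 0} f) :=
    preservesBinaryBiproducts_of_preservesBinaryCoproducts _
  exact Functor.additive_of_preservesBinaryBiproducts _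

/-- The degreewise base change `K ⊗_R S` of an `ℕ`-indexed chain complex of `R`-modules
along a ring homomorphism `f : R → S`. -/
noncomputable def baseChangeComplex {R S : Type} [CommRing R] [CommRing S] (f : R →+* S)
    (K : ChainComplex (ModuleCat.{0} R) ℕ) : ChainComplex (ModuleCat.{0} S) ℕ :=
  ((ModuleCat.extendScalars.{0, 0, 0} f).mapHomologicalComplex (ComplexShape.down ℕ)).obj K

/-!
For a module `Q` over `R` and a surjection `R → S` with nilpotent kernel `I`, `S ⊗ Q = 0` means
`Q = I Q = I² Q = ⋯ = 0`; applied to cokernels, `S ⊗ -` reflects surjectivity. It need not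
reflect exactness of `A → B → C`, but it does once the image of `B → C` is flat: then
`S ⊗ Z → S ⊗ B` is injective for the kernel `Z` of `B → C`, and so `S ⊗ A → S ⊗ Z` is
surjective. Along a complex of flat modules bounded below, exactness and flatness of the images
propagate upwards together, since the kernel of a surjection of flat modules is flat.
-/

section Module

open TensorProduct

variable {R S : Type*} [CommRing R] [CommRing S] [Algebra R S]
variable {M N P : Type*} [AddCommGroup M] [AddCommGroup N] [AddCommGroup P]
  [Module R M] [Module R N] [Module R P]

theorem subsingleton_of_smul_top_eq_top_of_isNilpotent {I : Ideal R} (hI : IsNilpotent I)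
    (hM : I • (⊤ : Submodule R M) = ⊤) : Subsingleton M := by
  obtain ⟨n, hn⟩ := hI
  have pow_smul_top (m : ℕ) : I ^ m • (⊤ : Submodule R M) = ⊤ := by
    induction m with
    | zero => rw [pow_zero, one_smul]
    | succ m ih => rw [pow_succ, mul_smul, hM, ih]
  have bot_eq_top : (⊥ : Submodule R M) = ⊤ := by
    rw [← pow_smul_top n, hn, zero_smul, Submodule.zero_eq_bot]
  exact (Submodule.subsingleton_iff R).mp (subsingleton_of_bot_eq_top bot_eq_top)

theorem subsingleton_of_subsingleton_tensorProduct_of_isNilpotent_ker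
    (hS : Function.Surjective (algebraMap R S))
    (hnil : IsNilpotent (RingHom.ker (algebraMap R S))) [Subsingleton (S ⊗[R] M)] :
    Subsingleton M := by
  let quotientEquiv : (R ⧸ RingHom.ker (algebraMap R S)) ≃ₗ[R] S :=
    (Ideal.quotientKerAlgEquivOfSurjective (f := Algebra.ofId R S) hS).toLinearEquiv
  have : Subsingleton (M ⧸ RingHom.ker (algebraMap R S) • (⊤ : Submodule R M)) :=
    ((quotTensorEquivQuotSMul M _).symm ≪≫ₗ quotientEquiv.rTensor M).toEquiv.subsingleton
  exact subsingleton_of_smul_top_eq_top_of_isNilpotent hnil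
    (Submodule.Quotient.subsingleton_iff.mp this)

theorem surjective_of_surjective_lTensor_of_isNilpotent_ker
    (hS : Function.Surjective (algebraMap R S))
    (hnil : IsNilpotent (RingHom.ker (algebraMap R S))) {g : M →ₗ[R] N}
    (hg : Function.Surjective (g.lTensor S)) : Function.Surjective g := by
  have coker_exact : Function.Exact (g.lTensor S) (g.range.mkQ.lTensor S) :=
    lTensor_exact S (LinearMap.exact_map_mkQ_range g) g.range.mkQ_surjective
  have mkQ_eq_zero : g.range.mkQ.lTensor S = 0 :=
    LinearMap.ext fun x => (coker_exact x).mpr (hg x)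
  have : Subsingleton (S ⊗[R] (N ⧸ g.range)) :=
    subsingleton_of_forall_eq 0 fun z => by
      obtain ⟨y, rfl⟩ := LinearMap.lTensor_surjective S g.range.mkQ_surjective z
      rw [mkQ_eq_zero, LinearMap.zero_apply]
  have : Subsingleton (N ⧸ g.range) :=
    subsingleton_of_subsingleton_tensorProduct_of_isNilpotent_ker hS hnil
  exact LinearMap.range_eq_top.mp (Submodule.Quotient.subsingleton_iff.mp this)

theorem flat_of_injective_of_exact_of_surjective [Module.Flat R N] [Module.Flat R P]
    {g : M →ₗ[R] N} {h : N →ₗ[R] P} (hg : Function.Injective g) (hgh : Function.Exact g h)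
    (hh : Function.Surjective h) : Module.Flat R M := by
  refine Module.Flat.iff_rTensor_injective'.mpr fun I => ?_
  have comp_injective : Function.Injective (I.subtype.rTensor N ∘ₗ g.lTensor I) :=
    (Module.Flat.rTensor_preserves_injective_linearMap _ I.subtype_injective).comp
      (LinearMap.lTensor_injective_of_exact_of_flat h hh g hg hgh I)
  rw [LinearMap.rTensor_comp_lTensor, ← LinearMap.lTensor_comp_rTensor] at comp_injective
  exact Function.Injective.of_comp comp_injective

theorem exact_subtype_ker_rangeRestrict (h : N →ₗ[R] P) :
    Function.Exact h.ker.subtype h.rangeRestrict := by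
  rw [← h.ker_rangeRestrict]
  exact LinearMap.exact_subtype_ker_map h.rangeRestrict

theorem flat_range_of_exact [Module.Flat R N] {g : M →ₗ[R] N} {h : N →ₗ[R] P}
    [Module.Flat R h.range] (hgh : Function.Exact g h) : Module.Flat R g.range := by
  rw [← LinearMap.exact_iff.mp hgh]
  exact flat_of_injective_of_exact_of_surjective h.ker.subtype_injective
    (exact_subtype_ker_rangeRestrict h) h.surjective_rangeRestrict

theorem exact_of_exact_lTensor_of_isNilpotent_ker
    (hS : Function.Surjective (algebraMap R S))
    (hnil : IsNilpotent (RingHom.ker (algebraMap R S))) {g : M →ₗ[R] N} {h : N →ₗ[R] P}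
    [Module.Flat R h.range] (hgh : h ∘ₗ g = 0)
    (hexact : Function.Exact (g.lTensor S) (h.lTensor S)) : Function.Exact g h := by
  let toKer : M →ₗ[R] h.ker := g.codRestrict h.ker (LinearMap.congr_fun hgh)
  have subtype_comp_toKer : h.ker.subtype ∘ₗ toKer = g :=
    LinearMap.subtype_comp_codRestrict ..
  have ker_injective : Function.Injective (h.ker.subtype.lTensor S) :=
    LinearMap.lTensor_injective_of_exact_of_flat h.rangeRestrict h.surjective_rangeRestrict
      h.ker.subtype h.ker.subtype_injective (exact_subtype_ker_rangeRestrict h) S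
  have toKer_lTensor_surjective : Function.Surjective (toKer.lTensor S) := fun z => by
    have lTensor_map_eq_zero : h.lTensor S (h.ker.subtype.lTensor S z) = 0 := by
      rw [← LinearMap.lTensor_comp_apply, LinearMap.comp_ker_subtype, LinearMap.lTensor_zero,
        LinearMap.zero_apply]
    obtain ⟨x, hx⟩ := (hexact _).mp lTensor_map_eq_zero
    refine ⟨x, ker_injective ?_⟩
    rwa [← LinearMap.lTensor_comp_apply, subtype_comp_toKer]
  have toKer_surjective : Function.Surjective toKer :=
    surjective_of_surjective_lTensor_of_isNilpotent_ker hS hnil toKer_lTensor_surjective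
  refine LinearMap.exact_of_comp_of_mem_range hgh fun y hy => ?_
  obtain ⟨x, hx⟩ := toKer_surjective ⟨y, hy⟩
  exact ⟨x, congrArg Subtype.val hx⟩

end Module

theorem isNilpotent_ker_of_isArtinianRing_of_isLocalRing {R S : Type*} [CommRing R]
    [IsArtinianRing R] [IsLocalRing R] [CommRing S] [Nontrivial S] (f : R →+* S) :
    IsNilpotent (RingHom.ker f) := by
  have ker_le_nilradical : RingHom.ker f ≤ nilradical R := by
    rw [Ring.KrullDimLE.nilradical_eq_maximalIdeal]
    exact IsLocalRing.le_maximalIdeal (RingHom.ker_ne_top f)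
  obtain ⟨n, hn⟩ := IsArtinianRing.isNilpotent_nilradical (R := R)
  exact ⟨n, le_bot_iff.mp ((Ideal.pow_right_mono ker_le_nilradical n).trans hn.le)⟩

theorem exactAt_iff_function_exact {R : Type*} [Ring R] {ι : Type*} {c : ComplexShape ι}
    (K : HomologicalComplex (ModuleCat R) c) {i j l : ι} (hi : c.prev j = i) (hl : c.next j = l) :
    K.ExactAt j ↔ Function.Exact (K.d i j) (K.d j l) := by
  rw [K.exactAt_iff' i j l hi hl, ShortComplex.ShortExact.moduleCat_exact_iff_function_exact]
  rfl

section BaseChange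

variable {R S : Type} [CommRing R] [CommRing S]

theorem exactAt_baseChangeComplex_iff (f : R →+* S) (K : ChainComplex (ModuleCat.{0} R) ℕ)
    {i j l : ℕ} (hi : (ComplexShape.down ℕ).prev j = i) (hl : (ComplexShape.down ℕ).next j = l) :
    letI := f.toAlgebra
    (baseChangeComplex f K).ExactAt j ↔
      Function.Exact ((K.d i j).hom.lTensor S) ((K.d j l).hom.lTensor S) :=
  -- The differentials of `baseChangeComplex f K` unfold to `lTensor S`, viewed as `S`-linear maps.
  exactAt_iff_function_exact (baseChangeComplex f K) hi hl

variable {f : R →+* S} {K : ChainComplex (ModuleCat.{0} R) ℕ} {d : ℕ}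

theorem exactAt_of_exactAt_baseChangeComplex_of_flat_range
    (hf : Function.Surjective f) (hnil : IsNilpotent (RingHom.ker f))
    (hrange : Module.Flat R (K.d d ((ComplexShape.down ℕ).next d)).hom.range)
    (hexact : (baseChangeComplex f K).ExactAt d) : K.ExactAt d := by
  let := f.toAlgebra
  refine (exactAt_iff_function_exact K rfl rfl).mpr ?_
  refine exact_of_exact_lTensor_of_isNilpotent_ker (S := S) hf hnil ?_
    ((exactAt_baseChangeComplex_iff f K rfl rfl).mp hexact)
  rw [← ModuleCat.hom_comp, K.d_comp_d, ModuleCat.hom_zero]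

theorem flat_range_d_of_exactAt_baseChangeComplex
    (hf : Function.Surjective f) (hnil : IsNilpotent (RingHom.ker f))
    (hflat : ∀ i < d, Module.Flat R (K.X i))
    (hexact : ∀ i < d, (baseChangeComplex f K).ExactAt i) :
    Module.Flat R (K.d d ((ComplexShape.down ℕ).next d)).hom.range := by
  induction d with
  | zero =>
    have d_eq_zero : K.d 0 ((ComplexShape.down ℕ).next 0) = 0 := K.shape _ _ (by simp)
    rw [d_eq_zero, ModuleCat.hom_zero, LinearMap.range_zero]
    infer_instance
  | succ d ih =>
    have flat_range := ih (fun i hi => hflat i (by lia)) (fun i hi => hexact i (by lia))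
    have exactAt : K.ExactAt d :=
      exactAt_of_exactAt_baseChangeComplex_of_flat_range hf hnil flat_range (hexact d (by lia))
    have := hflat d (by lia)
    rw [ChainComplex.next_nat_succ]
    exact flat_range_of_exact
      ((exactAt_iff_function_exact K (ChainComplex.prev ℕ d) rfl).mp exactAt)

theorem exact_of_artinian_base_change_exact_general
    (hf : Function.Surjective f) (hnil : IsNilpotent (RingHom.ker f))
    (hflat : ∀ i < d, Module.Flat R (K.X i))
    (hexact : ∀ i ≤ d, IsZero ((baseChangeComplex f K).homology i)) :
    IsZero (K.homology d) := by
  simp only [← HomologicalComplex.exactAt_iff_isZero_homology] at hexact ⊢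
  exact exactAt_of_exactAt_baseChangeComplex_of_flat_range hf hnil
    (flat_range_d_of_exactAt_baseChangeComplex hf hnil hflat fun i hi => hexact i hi.le)
    (hexact d le_rfl)

end BaseChange

/-- Let `R` be a commutative Artinian local algebra over a field `k` and `f : R → S` a
surjective ring homomorphism with `S` nontrivial.  If `K` is an `ℕ`-indexed chain complex
of flat `R`-modules such that `K ⊗_R S` is exact, then `K` is exact. -/
theorem exact_of_artinian_base_change_exact
    (k : Type) [Field k] (R : Type) [CommRing R] [Algebra k R]
    [IsArtinianRing R] [IsLocalRing R]
    (S : Type) [CommRing S] [Nontrivial S] (f : R →+* S) (hf : Function.Surjective f)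
    (K : ChainComplex (ModuleCat.{0} R) ℕ) (hflat : ∀ i : ℕ, Module.Flat R (K.X i))
    (hexact : ∀ d : ℕ, IsZero ((baseChangeComplex f K).homology d)) :
    ∀ d : ℕ, IsZero (K.homology d) := by
  intro d
  exact exact_of_artinian_base_change_exact_general hf
    (isNilpotent_ker_of_isArtinianRing_of_isLocalRing f) (fun i _ => hflat i) fun i _ => hexact i
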